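/- arXiv:1609.04154 — 2 statements merged into one kernel-verified Lean document; each statement's English description precedes it below -/
import Mathlib

section
/- The two primitive embeddings i₁ and i₂ of A₅ into D₆ are not equivalent under the Weyl group: there is no element w ∈ W(D₆) such that w(i₁(A₅)) = i₂(A₅). -/
noncomputable section

abbrev V6 : Type := Fin 6 → ℚ

/-- The standard bilinear form on `ℚ⁶`. -/
def bil6 (x y : V6) : ℚ := ∑ i, x i * y i

def d1 : V6 := ![1, -1, 0, 0, 0, 0]
def d2 : V6 := ![0, 1, -1, 0, 0, 0]
def d3 : V6 := ![0, 0, 1, -1, 0, 0]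
def d4 : V6 := ![0, 0, 0, 1, -1, 0]
def d5 : V6 := ![0, 0, 0, 0, 1, -1]
def d6 : V6 := ![0, 0, 0, 0, 1, 1]

/-- The `D₆` root lattice: integer vectors with even coordinate sum. -/
def D6 : Submodule ℤ V6 where
  carrier := {x | (∀ i, ∃ m : ℤ, x i = (m : ℚ)) ∧ ∃ k : ℤ, (∑ i, x i) = 2 * (k : ℚ)}
  add_mem' := by
    rintro x y ⟨hx1, kx, hx2⟩ ⟨hy1, ky, hy2⟩
    refine ⟨fun i => ?_, kx + ky, ?_⟩
    · obtain ⟨m, hm⟩ := hx1 i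
      obtain ⟨m', hm'⟩ := hy1 i
      exact ⟨m + m', by push_cast [Pi.add_apply, hm, hm']; ring⟩
    · have : (∑ i, (x + y) i) = (∑ i, x i) + ∑ i, y i := by
        simp [Pi.add_apply, Finset.sum_add_distrib]
      rw [this, hx2, hy2]; push_cast; ring
  zero_mem' := ⟨fun i => ⟨0, by simp⟩, 0, by simp⟩
  smul_mem' := by
    rintro c x ⟨hx1, k, hx2⟩
    refine ⟨fun i => ?_, c * k, ?_⟩
    · obtain ⟨m, hm⟩ := hx1 i
      refine ⟨c * m, ?_⟩
      have : (c • x) i = (c : ℚ) * x i := by simp [Pi.smul_apply, zsmul_eq_mul]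
      rw [this, hm]; push_cast; ring
    · have : (∑ i, (c • x) i) = (c : ℚ) * ∑ i, x i := by
        simp [Pi.smul_apply, zsmul_eq_mul, Finset.mul_sum]
      rw [this, hx2]; push_cast; ring

/-- The first embedding `i₁(A₅) ⊂ D₆`, spanned by `d₁,…,d₅`. -/
def i1A5 : Submodule ℤ V6 := Submodule.span ℤ {d1, d2, d3, d4, d5}

/-- The second embedding `i₂(A₅) ⊂ D₆`, spanned by `d₁,…,d₄,d₆`. -/
def i2A5 : Submodule ℤ V6 := Submodule.span ℤ {d1, d2, d3, d4, d6}

/-- The Weyl group `W(D₆)`: the subgroup of linear automorphisms of `ℚ⁶` generated by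
the reflections in the roots (norm-`2` vectors) of `D₆`. -/
def WeylD6 : Subgroup (V6 ≃ₗ[ℚ] V6) :=
  Subgroup.closure {s | ∃ r ∈ (D6 : Set V6), bil6 r r = 2 ∧ ∀ x, s x = x - bil6 x r • r}


/-- The all-ones vector, which spans the orthogonal complement of `i₁(A₅)`. -/
def ones6 : V6 := fun _ => 1

lemma bil6_ones6_left (x : V6) : bil6 ones6 x = ∑ i, x i := by
  simp [bil6, ones6]

lemma bil6_ones6_eq_zero_of_mem_i1A5 {x : V6} (hx : x ∈ i1A5) : bil6 ones6 x = 0 := by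
  rw [bil6_ones6_left]
  unfold i1A5 at hx
  induction hx using Submodule.span_induction with
  | mem x hx =>
    simp only [Set.mem_insert_iff, Set.mem_singleton_iff] at hx
    rcases hx with rfl | rfl | rfl | rfl | rfl <;>
      simp [Fin.sum_univ_six, d1, d2, d3, d4, d5]
  | zero => simp
  | add x y _ _ hx hy => simp [Finset.sum_add_distrib, hx, hy]
  | smul a x _ hx => simp [← Finset.mul_sum, hx]

/-- The form is integral on `D₆`. -/
lemma exists_int_bil6_eq {x y : V6} (hx : x ∈ D6) (hy : y ∈ D6) :
    ∃ m : ℤ, bil6 x y = m := by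
  choose a ha using hx.1
  choose b hb using hy.1
  exact ⟨∑ i, a i * b i, by simp [bil6, ha, hb]⟩

lemma bil6_reflection {r : V6} (hr : bil6 r r = 2) (x y : V6) :
    bil6 (x - bil6 x r • r) (y - bil6 y r • r) = bil6 x y := by
  have expand (a b : ℚ) : bil6 (x - a • r) (y - b • r) =
      bil6 x y - b * bil6 x r - a * bil6 y r + a * b * bil6 r r := by
    simp only [bil6, Fin.sum_univ_six, Pi.sub_apply, Pi.smul_apply, smul_eq_mul]
    ring
  rw [expand, hr]
  ring

lemma reflection_reflection {r : V6} (hr : bil6 r r = 2) (x : V6) :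
    (x - bil6 x r • r) - bil6 (x - bil6 x r • r) r • r = x := by
  have expand (a : ℚ) : bil6 (x - a • r) r = bil6 x r - a * bil6 r r := by
    simp only [bil6, Fin.sum_univ_six, Pi.sub_apply, Pi.smul_apply, smul_eq_mul]
    ring
  rw [expand, hr]
  module

/-- Reflections in roots preserve the coset `ones6 + 2 D₆`. -/
lemma reflection_ones6_add_two_smul {r z : V6} (hr : r ∈ D6) (hz : z ∈ D6) :
    ∃ z' ∈ D6, ones6 + (2 : ℚ) • z - bil6 (ones6 + (2 : ℚ) • z) r • r =
      ones6 + (2 : ℚ) • z' := by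
  obtain ⟨k, hk⟩ := hr.2
  obtain ⟨m, hm⟩ := exists_int_bil6_eq hz hr
  refine ⟨z - (k + m) • r, D6.sub_mem hz (D6.smul_mem _ hr), ?_⟩
  have hb : bil6 (ones6 + (2 : ℚ) • z) r = 2 * (k + m) := by
    rw [mul_add, ← hk, ← hm, ← bil6_ones6_left]
    simp only [bil6, Fin.sum_univ_six, Pi.add_apply, Pi.smul_apply, smul_eq_mul]
    ring
  rw [hb]
  ext i
  simp
  ring

/-- Elements of the Weyl group are isometries preserving the coset `ones6 + 2 D₆`. -/
lemma WeylD6_isometry_and_ones6 {w : V6 ≃ₗ[ℚ] V6} (hw : w ∈ WeylD6) :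
    (∀ x y, bil6 (w x) (w y) = bil6 x y) ∧ ∃ z ∈ D6, w ones6 = ones6 + (2 : ℚ) • z := by
  have step {s w : V6 ≃ₗ[ℚ] V6} {r : V6} (hr : r ∈ D6) (hrr : bil6 r r = 2)
      (hs : ∀ x, s x = x - bil6 x r • r)
      (ih : (∀ x y, bil6 (w x) (w y) = bil6 x y) ∧
        ∃ z ∈ D6, w ones6 = ones6 + (2 : ℚ) • z) :
      (∀ x y, bil6 ((s * w) x) ((s * w) y) = bil6 x y) ∧
        ∃ z ∈ D6, (s * w) ones6 = ones6 + (2 : ℚ) • z := by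
    obtain ⟨hiso, z, hz, hwz⟩ := ih
    simp only [LinearEquiv.mul_apply, hs]
    refine ⟨fun x y => by rw [bil6_reflection hrr, hiso], ?_⟩
    rw [hwz]
    exact reflection_ones6_add_two_smul hr hz
  unfold WeylD6 at hw
  induction hw using Subgroup.closure_induction_left with
  | one => exact ⟨fun _ _ => rfl, 0, D6.zero_mem, by simp⟩
  | mul_left s hs w _ ih =>
    obtain ⟨r, hr, hrr, hs⟩ := hs
    exact step hr hrr hs ih
  | inv_mul_cancel s hs w _ ih =>
    obtain ⟨r, hr, hrr, hs⟩ := hs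
    have hinv : s⁻¹ = s := by
      rw [inv_eq_iff_mul_eq_one]
      ext1 x
      simp only [LinearEquiv.mul_apply, hs, reflection_reflection hrr, LinearEquiv.coe_one, id]
    rw [hinv]
    exact step hr hrr hs ih

/-- The two primitive embeddings `i₁(A₅)` and `i₂(A₅)` in `D₆` are not
equivalent under the Weyl group `W(D₆)`. -/
theorem i1_not_Weyl_equivalent_to_i2 :
    ¬ ∃ w ∈ WeylD6, ⇑w '' (i1A5 : Set V6) = (i2A5 : Set V6) := by
  rintro ⟨w, hw, himage⟩
  obtain ⟨hiso, z, hz, hwz⟩ := WeylD6_isometry_and_ones6 hw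
  have horth {y : V6} (hy : y ∈ ({d1, d2, d3, d4, d6} : Set V6)) : bil6 (w ones6) y = 0 := by
    have hy' : y ∈ (i2A5 : Set V6) := Submodule.subset_span hy
    rw [← himage] at hy'
    obtain ⟨x, hx, rfl⟩ := hy'
    rw [hiso, bil6_ones6_eq_zero_of_mem_i1A5 hx]
  have h1 := horth (y := d1) (by simp)
  have h2 := horth (y := d2) (by simp)
  have h3 := horth (y := d3) (by simp)
  have h4 := horth (y := d4) (by simp)
  have h6 := horth (y := d6) (by simp)
  have hnorm := hiso ones6 ones6
  obtain ⟨k, hk⟩ := hz.2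
  have hsum : ∑ i, w ones6 i = 6 + 4 * k := by
    rw [hwz]
    simp only [Pi.add_apply, Finset.sum_add_distrib, Pi.smul_apply, smul_eq_mul,
      ← Finset.mul_sum, hk, ones6]
    norm_num
    ring
  generalize w ones6 = y at *
  simp [bil6, Fin.sum_univ_six, d1, d2, d3, d4, d6, ones6] at h1 h2 h3 h4 h6 hnorm hsum
  have e1 : y 1 = y 0 := by linarith
  have e2 : y 2 = y 0 := by linarith
  have e3 : y 3 = y 0 := by linarith
  have e4 : y 4 = y 0 := by linarith
  have e5 : y 5 = -y 0 := by linarith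
  rw [e1, e2, e3, e4, e5] at hnorm hsum
  have hy : y 0 = 1 ∨ y 0 = -1 := mul_self_eq_one_iff.mp (by linarith)
  rcases hy with hy | hy <;> rw [hy] at hsum <;> norm_num at hsum <;> norm_cast at hsum <;> omega
end
end

section
/- The linear isometries H₁ : (x,y,z) ↦ (γ₀(y), x, g(z)) and H₂ : (x,y,z) ↦ (y, γ₀(x), g(z)) of ℚ¹⁰ ⊕ ℚ¹⁰ ⊕ ℚ⁶ each map the Niemeier lattice N(A₉²D₆) onto itself; in particular H₁ and H₂ are automorphisms of N(A₉²D₆) inducing the exchange of the two A₉-components. -/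
noncomputable section

/-- The nontrivial Dynkin diagram automorphism `g` of `D₆`:
`g(e₆) = -e₆` and `g(eᵢ) = eᵢ` for `i ≤ 5` (it interchanges `d₅` and `d₆`). -/
def gmap (x : V6) : V6 := fun i => if i = 5 then -x 5 else x i

/-- The glue vector `δ₆ = ½(d₁+2d₂+3d₃+4d₄+2d₅+3d₆)`, representing the class `[1]`. -/
def delta6 : V6 :=
  (1/2 : ℚ) • (d1 + (2 : ℚ) • d2 + (3 : ℚ) • d3 + (4 : ℚ) • d4 + (2 : ℚ) • d5 + (3 : ℚ) • d6)

/-- The glue vector `δ̄₆ = d₁+d₂+d₃+d₄+½(d₅+d₆)`, representing the class `[2]`. -/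
def deltaBar6 : V6 := d1 + d2 + d3 + d4 + (1/2 : ℚ) • (d5 + d6)

/-- The glue vector `δ̃₆ = ½(d₁+2d₂+3d₃+4d₄+3d₅+2d₆)`, representing the class `[3]`. -/
def deltaTilde6 : V6 :=
  (1/2 : ℚ) • (d1 + (2 : ℚ) • d2 + (3 : ℚ) • d3 + (4 : ℚ) • d4 + (3 : ℚ) • d5 + (2 : ℚ) • d6)

abbrev V10 : Type := Fin 10 → ℚ

/-- The standard bilinear form on `ℚ¹⁰`. -/
def bil10 (x y : V10) : ℚ := ∑ i, x i * y i

/-- The simple roots `aᵢ = eᵢ - eᵢ₊₁` of `A₉` (here `a i` is `a_{i+1}` for `i : Fin 9`). -/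
def a (i : Fin 9) : V10 :=
  fun j => if (j : ℕ) = (i : ℕ) then 1 else if (j : ℕ) = (i : ℕ) + 1 then -1 else 0

/-- The `A₉` root lattice: integer vectors in `ℚ¹⁰` with coordinate sum zero. -/
def A9 : Submodule ℤ V10 where
  carrier := {x | (∀ i, ∃ m : ℤ, x i = (m : ℚ)) ∧ (∑ i, x i) = 0}
  add_mem' := by
    rintro x y ⟨hx1, hx2⟩ ⟨hy1, hy2⟩
    refine ⟨fun i => ?_, ?_⟩
    · obtain ⟨m, hm⟩ := hx1 i
      obtain ⟨m', hm'⟩ := hy1 i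
      exact ⟨m + m', by push_cast [Pi.add_apply, hm, hm']; ring⟩
    · have : (∑ i, (x + y) i) = (∑ i, x i) + ∑ i, y i := by
        simp [Pi.add_apply, Finset.sum_add_distrib]
      rw [this, hx2, hy2]; ring
  zero_mem' := ⟨fun i => ⟨0, by simp⟩, by simp⟩
  smul_mem' := by
    rintro c x ⟨hx1, hx2⟩
    refine ⟨fun i => ?_, ?_⟩
    · obtain ⟨m, hm⟩ := hx1 i
      refine ⟨c * m, ?_⟩
      have : (c • x) i = (c : ℚ) * x i := by simp [Pi.smul_apply, zsmul_eq_mul]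
      rw [this, hm]; push_cast; ring
    · have : (∑ i, (c • x) i) = (c : ℚ) * ∑ i, x i := by
        simp [Pi.smul_apply, zsmul_eq_mul, Finset.mul_sum]
      rw [this, hx2]; ring

/-- The glue generator `α = (1/10)(9a₁+8a₂+7a₃+6a₄+5a₅+4a₆+3a₇+2a₈+a₉)` of `A₉*/A₉`. -/
def alphaA9 : V10 := (1/10 : ℚ) • ∑ i : Fin 9, ((9 : ℚ) - (i : ℕ)) • a i

/-- The nontrivial diagram automorphism `γ₀` of `A₉`: `eᵢ ↦ -e₁₁₋ᵢ` (so `aᵢ ↦ a₁₀₋ᵢ`). -/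
def gamma0 (x : V10) : V10 := fun j => -(x j.rev)

abbrev V26 : Type := V10 × V10 × V6

/-- The standard bilinear form on `ℚ²⁶ = ℚ¹⁰ ⊕ ℚ¹⁰ ⊕ ℚ⁶`. -/
def bil26 (x y : V26) : ℚ := bil10 x.1 y.1 + bil10 x.2.1 y.2.1 + bil6 x.2.2 y.2.2

/-- The Niemeier lattice `N(A₉²D₆)`: the `ℤ`-submodule of `ℚ²⁶` generated by `A₉ ⊕ A₉ ⊕ D₆`
together with the glue vectors `(2α,4α,0)`, `(5α,0,δ₆)` and `(0,5α,δ̃₆)`. -/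
def NL2 : Submodule ℤ V26 :=
  Submodule.span ℤ ({p : V26 | p.1 ∈ A9 ∧ p.2.1 ∈ A9 ∧ p.2.2 ∈ D6} ∪
    {((2 : ℚ) • alphaA9, (4 : ℚ) • alphaA9, 0),
     ((5 : ℚ) • alphaA9, 0, delta6),
     (0, (5 : ℚ) • alphaA9, deltaTilde6)})

theorem alphaA9_apply (j : Fin 10) : alphaA9 j = if j = 0 then 9 / 10 else -1 / 10 := by
  fin_cases j <;> norm_num [alphaA9, a, Fin.sum_univ_succ]

theorem gamma0_gamma0 (x : V10) : gamma0 (gamma0 x) = x := by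
  ext j
  simp [gamma0]

theorem gmap_gmap (x : V6) : gmap (gmap x) = x := by
  ext j
  by_cases h : j = 5 <;> simp [gmap, h]

theorem gamma0_mem_A9 {x : V10} (hx : x ∈ A9) : gamma0 x ∈ A9 := by
  obtain ⟨hcoord, hsum⟩ := hx
  refine ⟨fun i => ?_, ?_⟩
  · obtain ⟨m, hm⟩ := hcoord i.rev
    exact ⟨-m, by simp [gamma0, hm]⟩
  · have h := Equiv.sum_comp Fin.revPerm x
    simp only [Fin.revPerm_apply] at h
    simp [gamma0, h, hsum]

theorem gmap_mem_D6 {x : V6} (hx : x ∈ D6) : gmap x ∈ D6 := by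
  obtain ⟨hcoord, k, hsum⟩ := hx
  obtain ⟨n, hn⟩ := hcoord 5
  refine ⟨fun i => ?_, k - n, ?_⟩
  · by_cases h : i = 5
    · exact ⟨-n, by simp [gmap, h, hn]⟩
    · simpa [gmap, h] using hcoord i
  · have h : ∑ i, gmap x i = (∑ i, x i) - 2 * x 5 := by
      simp [gmap, Fin.sum_univ_six]
      ring
    rw [h, hsum, hn]
    push_cast
    ring

theorem ten_smul_alphaA9_mem : (10 : ℚ) • alphaA9 ∈ A9 := by
  refine ⟨fun i => ⟨if i = 0 then 9 else -1, ?_⟩, ?_⟩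
  · by_cases h : i = 0 <;> norm_num [alphaA9_apply, h]
  · norm_num [alphaA9_apply, Fin.sum_univ_succ]

/-- `γ₀` acts on the discriminant group of `A₉` as `-1`. -/
theorem gamma0_alphaA9_add_mem : gamma0 alphaA9 + alphaA9 ∈ A9 := by
  refine ⟨fun i => ⟨if i = 0 then 1 else if i = 9 then -1 else 0, ?_⟩, ?_⟩
  · fin_cases i <;> norm_num [gamma0, alphaA9_apply, Fin.rev, Fin.ext_iff]
  · norm_num [gamma0, alphaA9_apply, Fin.sum_univ_succ, Fin.rev]

theorem gmap_delta6 : gmap delta6 = deltaTilde6 := by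
  ext i
  fin_cases i <;> norm_num [gmap, Fin.ext_iff, delta6, deltaTilde6, d1, d2, d3, d4, d5, d6]
  rfl

theorem gmap_deltaTilde6 : gmap deltaTilde6 = delta6 := by
  rw [← gmap_delta6, gmap_gmap]

/-- `γ₀` as a rational linear map. -/
def gamma0Linear : V10 →ₗ[ℚ] V10 where
  toFun := gamma0
  map_add' x y := by
    ext j
    simp [gamma0, add_comm]
  map_smul' c x := by
    ext j
    simp [gamma0]

/-- `g` as a rational linear map. -/
def gmapLinear : V6 →ₗ[ℚ] V6 where
  toFun := gmap
  map_add' x y := by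
    ext j
    by_cases h : j = 5 <;> simp [gmap, h, add_comm]
  map_smul' c x := by
    ext j
    by_cases h : j = 5 <;> simp [gmap, h]

theorem gamma0_smul (c : ℚ) (x : V10) : gamma0 (c • x) = c • gamma0 x :=
  gamma0Linear.map_smul c x

theorem gamma0_zero : gamma0 0 = 0 := gamma0Linear.map_zero

theorem gmap_zero : gmap 0 = 0 := gmapLinear.map_zero

/-- The isometry `H₁ : (x, y, z) ↦ (γ₀(y), x, g(z))`. -/
def isometryH1 : V26 →ₗ[ℚ] V26 where
  toFun p := (gamma0 p.2.1, p.1, gmap p.2.2)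
  map_add' _ _ := Prod.ext (gamma0Linear.map_add _ _)
    (Prod.ext rfl (gmapLinear.map_add _ _))
  map_smul' _ _ := Prod.ext (gamma0Linear.map_smul _ _)
    (Prod.ext rfl (gmapLinear.map_smul _ _))

/-- The isometry `H₂ : (x, y, z) ↦ (y, γ₀(x), g(z))`. -/
def isometryH2 : V26 →ₗ[ℚ] V26 where
  toFun p := (p.2.1, gamma0 p.1, gmap p.2.2)
  map_add' _ _ := Prod.ext rfl
    (Prod.ext (gamma0Linear.map_add _ _) (gmapLinear.map_add _ _))
  map_smul' _ _ := Prod.ext rfl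
    (Prod.ext (gamma0Linear.map_smul _ _) (gmapLinear.map_smul _ _))

theorem isometryH1_apply (p : V26) : isometryH1 p = (gamma0 p.2.1, p.1, gmap p.2.2) := rfl

theorem isometryH2_apply (p : V26) : isometryH2 p = (p.2.1, gamma0 p.1, gmap p.2.2) := rfl

theorem isometryH1_isometryH2 (p : V26) : isometryH1 (isometryH2 p) = p := by
  simp [isometryH1_apply, isometryH2_apply, gamma0_gamma0, gmap_gmap]

theorem isometryH2_isometryH1 (p : V26) : isometryH2 (isometryH1 p) = p := by
  simp [isometryH1_apply, isometryH2_apply, gamma0_gamma0, gmap_gmap]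

theorem mem_NL2_of_roots {x y : V10} {z : V6} (hx : x ∈ A9) (hy : y ∈ A9) (hz : z ∈ D6) :
    ((x, y, z) : V26) ∈ NL2 :=
  Submodule.subset_span (Or.inl ⟨hx, hy, hz⟩)

theorem glue_two_four_mem : (((2 : ℚ) • alphaA9, (4 : ℚ) • alphaA9, 0) : V26) ∈ NL2 :=
  Submodule.subset_span (by simp)

theorem glue_delta6_mem : (((5 : ℚ) • alphaA9, 0, delta6) : V26) ∈ NL2 :=
  Submodule.subset_span (by simp)

theorem glue_deltaTilde6_mem : ((0, (5 : ℚ) • alphaA9, deltaTilde6) : V26) ∈ NL2 :=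
  Submodule.subset_span (by simp)

/-- A map preserves the lattice as soon as it sends its generators into it. -/
theorem map_mem_NL2 (f : V26 →ₗ[ℚ] V26)
    (hroots : ∀ x ∈ A9, ∀ y ∈ A9, ∀ z ∈ D6, f (x, y, z) ∈ NL2)
    (htwo_four : f ((2 : ℚ) • alphaA9, (4 : ℚ) • alphaA9, 0) ∈ NL2)
    (hdelta : f ((5 : ℚ) • alphaA9, 0, delta6) ∈ NL2)
    (htilde : f (0, (5 : ℚ) • alphaA9, deltaTilde6) ∈ NL2)
    {p : V26} (hp : p ∈ NL2) : f p ∈ NL2 := by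
  have hle : NL2 ≤ NL2.comap (f.restrictScalars ℤ) := by
    refine Submodule.span_le.2 ?_
    rintro q (⟨hx, hy, hz⟩ | rfl | rfl | rfl)
    · exact hroots _ hx _ hy _ hz
    · exact htwo_four
    · exact hdelta
    · exact htilde
  exact hle hp

theorem isometryH1_mem_NL2 {p : V26} (hp : p ∈ NL2) : isometryH1 p ∈ NL2 := by
  refine map_mem_NL2 isometryH1 (fun x hx y hy z hz => ?_) ?_ ?_ ?_ hp
  · exact mem_NL2_of_roots (gamma0_mem_A9 hy) hx (gmap_mem_D6 hz)
  · have hroot := mem_NL2_of_roots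
      (A9.sub_mem (A9.smul_mem 4 gamma0_alphaA9_add_mem) ten_smul_alphaA9_mem)
      (A9.neg_mem ten_smul_alphaA9_mem) D6.zero_mem
    convert NL2.add_mem (NL2.smul_mem 3 glue_two_four_mem) hroot using 1
    simp only [isometryH1_apply, gamma0_smul, gmap_zero]
    simp only [Prod.mk_add_mk, Prod.smul_mk, Prod.mk.injEq]
    exact ⟨by module, by module, by module⟩
  · simpa only [isometryH1_apply, gamma0_zero, gmap_delta6] using glue_deltaTilde6_mem
  · have hroot := mem_NL2_of_roots
      (A9.sub_mem (A9.smul_mem 5 gamma0_alphaA9_add_mem) ten_smul_alphaA9_mem)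
      A9.zero_mem D6.zero_mem
    convert NL2.add_mem glue_delta6_mem hroot using 1
    simp only [isometryH1_apply, gamma0_smul, gmap_deltaTilde6]
    simp only [Prod.mk_add_mk, Prod.mk.injEq]
    exact ⟨by module, by module, by module⟩

theorem isometryH2_mem_NL2 {p : V26} (hp : p ∈ NL2) : isometryH2 p ∈ NL2 := by
  refine map_mem_NL2 isometryH2 (fun x hx y hy z hz => ?_) ?_ ?_ ?_ hp
  · exact mem_NL2_of_roots hy (gamma0_mem_A9 hx) (gmap_mem_D6 hz)
  · have hroot := mem_NL2_of_roots A9.zero_mem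
      (A9.sub_mem (A9.smul_mem 2 gamma0_alphaA9_add_mem) ten_smul_alphaA9_mem) D6.zero_mem
    convert NL2.add_mem (NL2.smul_mem 2 glue_two_four_mem) hroot using 1
    simp only [isometryH2_apply, gamma0_smul, gmap_zero]
    simp only [Prod.mk_add_mk, Prod.smul_mk, Prod.mk.injEq]
    exact ⟨by module, by module, by module⟩
  · have hroot := mem_NL2_of_roots A9.zero_mem
      (A9.sub_mem (A9.smul_mem 5 gamma0_alphaA9_add_mem) ten_smul_alphaA9_mem) D6.zero_mem
    convert NL2.add_mem glue_deltaTilde6_mem hroot using 1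
    simp only [isometryH2_apply, gamma0_smul, gmap_delta6]
    simp only [Prod.mk_add_mk, Prod.mk.injEq]
    exact ⟨by module, by module, by module⟩
  · simpa only [isometryH2_apply, gamma0_zero, gmap_deltaTilde6] using glue_delta6_mem

/-- The linear isometries `H₁ : (x,y,z) ↦ (γ₀(y), x, g(z))` and
`H₂ : (x,y,z) ↦ (y, γ₀(x), g(z))` each map the Niemeier lattice `N(A₉²D₆)` onto itself. -/
theorem H1_H2_preserve_NiemeierA9A9D6 :
    (fun p : V26 => (gamma0 p.2.1, p.1, gmap p.2.2)) '' (NL2 : Set V26) = (NL2 : Set V26) ∧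
    (fun p : V26 => (p.2.1, gamma0 p.1, gmap p.2.2)) '' (NL2 : Set V26) = (NL2 : Set V26) := by
  refine ⟨Set.Subset.antisymm ?_ ?_, Set.Subset.antisymm ?_ ?_⟩
  · rintro _ ⟨p, hp, rfl⟩
    exact isometryH1_mem_NL2 hp
  · exact fun p hp => ⟨isometryH2 p, isometryH2_mem_NL2 hp, isometryH1_isometryH2 p⟩
  · rintro _ ⟨p, hp, rfl⟩
    exact isometryH2_mem_NL2 hp
  · exact fun p hp => ⟨isometryH1 p, isometryH1_mem_NL2 hp, isometryH2_isometryH1 p⟩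
end
end
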